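/- (ZF) For every countable non-standard model N of PA there is a family (M_X : X ⊆ 2^ω) of models such that each M_X is an elementary extension of N, the cardinality of M_X and of SSy(M_X) both equal max{ω, |X|}, and for all X, Y ⊆ 2^ω: X ⊆ Y ⟺ M_X is an elementary submodel of M_Y ⟺ SSy(M_X) ⊆ SSy(M_Y). -/

import Mathlib

/- Work in an ultrapower of `N` over `ω`. Labelling every level of the binary tree by elements of
`N` gives each branch `f` an element `c f` of the ultrapower. If the standard binary digits of `c f`
are never those of an element generated, by Skolem functions, from `N` and the `c g` with `g ≠ f`,
then the Skolem hull of `N` and of the `c f`, for `f` in a set `T` of branches, has a standard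
system that determines `T`.

By Łoś's theorem such labels exist once, at each tree level `n ≥ k`, the first `k` predictions of a
label from labels of other nodes fail at a digit below a bound that does not depend on `n`. A random
label agrees with a prediction on its first `i` digits with probability `2⁻ⁱ`, so good labellings of
level `k` have positive density. Passing from `n` to `n + 1`, one asks every selection of one child
per node to be labelled well; by Cauchy–Schwarz the density `d` drops at worst to
`d ^ 2 ^ (number of nodes)`, a positive number that depends on neither the labels nor their
length. -/

open FirstOrder FirstOrder.Language

/-- Function symbols of the language of arithmetic: `0`, `1`, `+`, `·`. -/
inductive arithFunc : ℕ → Type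
  | zero : arithFunc 0
  | one : arithFunc 0
  | add : arithFunc 2
  | mul : arithFunc 2
  deriving DecidableEq

/-- Relation symbols of the language of arithmetic: `<`. -/
inductive arithRel : ℕ → Type
  | lt : arithRel 2
  deriving DecidableEq

/-- The first-order language of arithmetic `{0, 1, +, ·, <}`. -/
def arith : FirstOrder.Language := ⟨arithFunc, arithRel⟩

namespace Arith

variable {M : Type*} [arith.Structure M]

/-- The interpretation of `0`. -/
def zeroM (M : Type*) [arith.Structure M] : M :=
  Structure.funMap (L := arith) arithFunc.zero ![]

/-- The interpretation of `1`. -/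
def oneM (M : Type*) [arith.Structure M] : M :=
  Structure.funMap (L := arith) arithFunc.one ![]

/-- The interpretation of `+`. -/
def addM (x y : M) : M := Structure.funMap (L := arith) arithFunc.add ![x, y]

/-- The interpretation of `·`. -/
def mulM (x y : M) : M := Structure.funMap (L := arith) arithFunc.mul ![x, y]

/-- The interpretation of `<`. -/
def ltM (x y : M) : Prop := Structure.RelMap (L := arith) arithRel.lt ![x, y]

/-- Non-strict order. -/
def leM (x y : M) : Prop := ltM x y ∨ x = y

/-- The numeral `n` in `M`: `0`, or `1 + 1 + ⋯ + 1`. -/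
def numeral (M : Type*) [arith.Structure M] : ℕ → M
  | 0 => zeroM M
  | n + 1 => addM (numeral M n) (oneM M)

/-- The standard `arith`-structure on `ℕ`. -/
instance : arith.Structure ℕ where
  funMap {n} f v :=
    match f with
    | .zero => 0
    | .one => 1
    | .add => v 0 + v 1
    | .mul => v 0 * v 1
  RelMap {n} r v :=
    match r with
    | .lt => v 0 < v 1

/-- `M` is a model of Peano arithmetic: it satisfies the finitely many basic axioms of
`PA` together with induction for all parametrically definable sets (which is equivalent
to the usual first-order induction scheme). -/
def IsPAModel (M : Type*) [arith.Structure M] : Prop :=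
  (∀ x : M, addM x (zeroM M) = x) ∧
  (∀ x y : M, addM x (addM y (oneM M)) = addM (addM x y) (oneM M)) ∧
  (∀ x : M, mulM x (zeroM M) = zeroM M) ∧
  (∀ x y : M, mulM x (addM y (oneM M)) = addM (mulM x y) x) ∧
  (∀ x : M, ¬ ltM x (zeroM M)) ∧
  (∀ x y : M, ltM x (addM y (oneM M)) ↔ (ltM x y ∨ x = y)) ∧
  (∀ x : M, addM x (oneM M) ≠ zeroM M) ∧
  (∀ x y : M, addM x (oneM M) = addM y (oneM M) → x = y) ∧
  (∀ s : Set M, Set.Definable₁ (Set.univ : Set M) arith s →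
    zeroM M ∈ s → (∀ x ∈ s, addM x (oneM M) ∈ s) → ∀ x : M, x ∈ s)

/-- An element of `M` is standard if it is a numeral. -/
def IsStd (x : M) : Prop := ∃ n : ℕ, x = numeral M n

/-- `M` is a non-standard model of `PA`: a model of `PA` not isomorphic to the standard
model `ℕ`. -/
def NonstandardModel (M : Type*) [arith.Structure M] : Prop :=
  IsPAModel M ∧ ¬ Nonempty (M ≃[arith] ℕ)

/-- `(x)_i = 1`: the `i`-th binary digit of `x` is `1`, for standard `i`.  This is expressed
by saying that `x = u·2^(i+1) + (2^i + v)` with `v < 2^i`, where `2^i`, `2^(i+1)` are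
numerals. -/
def digitB (x : M) (i : ℕ) : Prop :=
  ∃ u v : M, x = addM (mulM u (numeral M (2 ^ (i + 1)))) (addM (numeral M (2 ^ i)) v) ∧
    ltM v (numeral M (2 ^ i))

/-- The standard system of `M`: the collection of subsets of `ℕ` coded by some
non-standard element of `M` (via its standard binary digits). -/
def SSy (M : Type*) [arith.Structure M] : Set (Set ℕ) :=
  {X | ∃ a : M, ¬ IsStd a ∧ ∀ i : ℕ, i ∈ X ↔ digitB a i}

/-- A function `M → M` is definable (with parameters) if its graph is a definable set. -/
def DefinableFun₁ (f : M → M) : Prop :=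
  Set.Definable (Set.univ : Set M) arith {v : Fin 2 → M | f (v 0) = v 1}

/-- A `k`-ary function `M^k → M` is definable (with parameters) if its graph is a
definable set. -/
def DefinableFun {k : ℕ} (F : (Fin k → M) → M) : Prop :=
  Set.Definable (Set.univ : Set M) arith
    {v : Fin (k + 1) → M | F (fun i => v i.castSucc) = v (Fin.last k)}

/-- `c` is the internal cardinality of the set `D ⊆ M`: there is an `M`-definable
bijection between `{x : x < c}` and `D`. -/
def InternalCard (D : Set M) (c : M) : Prop :=
  ∃ f : M → M, DefinableFun₁ f ∧ Set.BijOn f {x : M | ltM x c} D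

/-- `y = 2^x` in the model `M`, expressed via the existence of a definable function
satisfying the recursion of the base-`2` exponential up to `x`. -/
def IsPow2 (x y : M) : Prop :=
  ∃ f : M → M, DefinableFun₁ f ∧ f (zeroM M) = oneM M ∧
    (∀ z : M, ltM z x → f (addM z (oneM M)) = addM (f z) (f z)) ∧ f x = y

end Arith

section Density

open Finset Function
open scoped BigOperators

variable {ι κ A : Type*} [Fintype ι] [Fintype κ] [Fintype A]

theorem dens_filter_eq_expect {X : Type*} [Fintype X] (p : X → Prop) [DecidablePred p] :
    dens {x | p x} = 𝔼 x, if p x then (1 : ℚ≥0) else 0 := by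
  rw [← NNRat.cast_id (dens _), ← expect_indicator_one]
  simp [Set.indicator_apply]

section

variable [DecidableEq ι] [Nonempty A]

theorem expect_expect_update (F : (ι → A) → ℚ≥0) (c : ι) :
    𝔼 x, 𝔼 z, F (update x c z) = 𝔼 x, F x := by
  have swap_involutive : Involutive fun p : (ι → A) × A => (update p.1 c p.2, p.1 c) := by
    rintro ⟨x, z⟩
    simp
  calc 𝔼 x, 𝔼 z, F (update x c z)
      = 𝔼 p : (ι → A) × A, F (update p.1 c p.2) := (expect_product' univ univ _).symm
    _ = 𝔼 p : (ι → A) × A, F p.1 :=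
        Fintype.expect_equiv swap_involutive.toPerm _ _ fun _ => rfl
    _ = 𝔼 x, F x := by
        rw [← univ_product_univ, expect_product]
        simp only [expect_const univ_nonempty]

theorem expect_dens_filter_update (p : (ι → A) → Prop) [DecidablePred p] (c : ι) :
    𝔼 x, dens {z | p (update x c z)} = dens {x | p x} := by
  simp only [dens_filter_eq_expect]
  exact expect_expect_update (fun x => if p x then 1 else 0) c

theorem dens_filter_le_of_forall_update (p : (ι → A) → Prop) [DecidablePred p] (c : ι) {ε : ℚ≥0}
    (h : ∀ x, dens {z | p (update x c z)} ≤ ε) : dens {x | p x} ≤ ε := by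
  rw [← expect_dens_filter_update p c]
  exact expect_le univ_nonempty fun x _ => h x

theorem sq_expect_le {X : Type*} [Fintype X] (f : X → ℚ≥0) : (𝔼 x, f x) ^ 2 ≤ 𝔼 x, f x ^ 2 := by
  rcases isEmpty_or_nonempty X with _ | _
  · simp
  · simpa using expect_mul_sq_le_sq_mul_sq univ f 1

theorem sq_dens_filter_le {p : (ι → A) → Prop} [DecidablePred p] {b c : ι} (hbc : b ≠ c)
    (hp : ∀ x z, p (update x b z) ↔ p x) :
    dens {x | p x} ^ 2 ≤ dens {x | p x ∧ p (x ∘ Equiv.swap b c)} := by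
  have resample (x : ι → A) (z w : A) :
      (p (update (update x c z) b w) ∧ p (update (update x c z) b w ∘ Equiv.swap b c)) ↔
        p (update x c z) ∧ p (update x c w) := by
    have : update (update x c z) b w ∘ Equiv.swap b c = update (update x c w) b z := by
      ext d
      rcases eq_or_ne d b with rfl | hb
      · simp [hbc.symm]
      rcases eq_or_ne d c with rfl | hc
      · simp [hb]
      simp [Equiv.swap_apply_of_ne_of_ne hb hc, hb, hc]
    rw [this, hp, hp]
  calc dens {x | p x} ^ 2
      = (𝔼 x, dens {z | p (update x c z)}) ^ 2 := by rw [expect_dens_filter_update]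
    _ ≤ 𝔼 x, dens {z | p (update x c z)} ^ 2 := sq_expect_le _
    _ = 𝔼 x, 𝔼 z, dens {w | p (update x c z) ∧ p (update x c w)} := by
        simp only [dens_filter_eq_expect, sq, Fintype.expect_mul_expect, ite_zero_mul_ite_zero,
          one_mul]
    _ = 𝔼 x, 𝔼 z, dens {w | p (update (update x c z) b w) ∧
          p (update (update x c z) b w ∘ Equiv.swap b c)} := by simp only [resample]
    _ = dens {x | p x ∧ p (x ∘ Equiv.swap b c)} := by
        rw [expect_expect_update (fun x => dens {w | p (update x b w) ∧
          p (update x b w ∘ Equiv.swap b c)}) c]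
        exact expect_dens_filter_update (fun x => p x ∧ p (x ∘ Equiv.swap b c)) b

end

theorem dens_filter_comp_mem [DecidableEq ι] [DecidableEq κ] [DecidableEq A] [Nonempty A]
    {i : κ → ι} (hi : Injective i) (D : Finset (κ → A)) :
    dens {x : ι → A | x ∘ i ∈ D} = dens D := by
  classical
  let φ : κ ⊕ ↥(Set.range i)ᶜ ≃ ι :=
    ((Equiv.ofInjective i hi).sumCongr (Equiv.refl _)).trans (Equiv.Set.sumCompl _)
  let ψ : (ι → A) ≃ (κ → A) × (↥(Set.range i)ᶜ → A) :=
    (φ.symm.arrowCongr (Equiv.refl A)).trans (Equiv.sumArrowEquivProdArrow ..)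
  calc dens {x : ι → A | x ∘ i ∈ D}
      = dens ((D ×ˢ univ).map ψ.symm.toEmbedding) := by
        congr 1
        ext x
        simp only [mem_filter_univ, mem_map_equiv, mem_product, mem_univ, and_true,
          Equiv.symm_symm]
        rfl
    _ = dens D := by
        rw [dens_map_equiv, dens, dens, card_product, Fintype.card_prod, card_univ]
        push_cast
        exact mul_div_mul_right _ _ (by simp)

theorem dens_filter_forall_lt_eq {m i : ℕ} (hi : i ≤ m) (w : ℕ → Bool) :
    dens {z : Fin m → Bool | ∀ l : Fin m, l < i → z l = w l} = 1 / 2 ^ i := by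
  let w' : Fin i → Bool := fun l => w l
  calc dens {z : Fin m → Bool | ∀ l : Fin m, l < i → z l = w l}
      = dens {z : Fin m → Bool | z ∘ Fin.castLE hi ∈ ({w'} : Finset _)} := by
        congr 1
        ext z
        simp only [mem_filter_univ, mem_singleton, funext_iff, Fin.forall_iff]
        exact ⟨fun h l hl => h l _ hl, fun h l _ hl => h l hl⟩
    _ = dens {w'} := dens_filter_comp_mem (Fin.castLE_injective hi) _
    _ = 1 / 2 ^ i := by simp [dens]

section

variable [DecidableEq ι] [DecidableEq κ] [DecidableEq A] (e : κ × Bool ≃ ι) (D : Finset (κ → A))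

/-- The labellings `x` of `ι ≃ κ × Bool` such that all labellings of `κ` obtained by choosing, at
each point `u`, one of the two labels of `x` above `u` belong to `D`; only the points of `S` are
allowed to choose the label at `true`. -/
def partialDoubling (S : Finset κ) : Finset (ι → A) :=
  {x | ∀ s : κ → Bool, (∀ u, s u = true → u ∈ S) → (fun u => x (e (u, s u))) ∈ D}

/-- The labellings `x` of `ι ≃ κ × Bool` such that all labellings of `κ` obtained by choosing, at
each point, one of the two labels of `x` above it belong to `D`. -/
def doubling : Finset (ι → A) :=
  {x | ∀ s : κ → Bool, (fun u => x (e (u, s u))) ∈ D}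

variable {e D}

theorem partialDoubling_univ : partialDoubling e D univ = doubling e D := by
  simp [partialDoubling, doubling]

theorem update_mem_partialDoubling_iff {S : Finset κ} {a : κ} (ha : a ∉ S) (x : ι → A) (z : A) :
    update x (e (a, true)) z ∈ partialDoubling e D S ↔ x ∈ partialDoubling e D S := by
  simp only [partialDoubling, mem_filter_univ]
  refine forall₂_congr fun s hs => ?_
  have avoid (u : κ) : e (u, s u) ≠ e (a, true) := fun h => by
    obtain ⟨rfl, hu⟩ := Prod.ext_iff.1 (e.injective h)
    exact ha (hs _ hu)
  simp only [update_of_ne (avoid _)]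

theorem mem_partialDoubling_insert {S : Finset κ} {a : κ} {x : ι → A}
    (hx : x ∈ partialDoubling e D S)
    (hx' : x ∘ Equiv.swap (e (a, true)) (e (a, false)) ∈ partialDoubling e D S) :
    x ∈ partialDoubling e D (insert a S) := by
  simp only [partialDoubling, mem_filter_univ, mem_insert] at *
  intro s hs
  cases hsa : s a
  · refine hx s fun u hu => (hs u hu).resolve_left ?_
    rintro rfl
    simp [hsa] at hu
  · have key := hx' (update s a false) fun u hu => by grind [update_apply]
    convert key using 2 with u
    rcases eq_or_ne u a with rfl | hua
    · simp [hsa]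
    · simp [hua, Equiv.swap_apply_of_ne_of_ne]

theorem dens_pow_le_dens_partialDoubling [Nonempty A] (S : Finset κ) :
    dens D ^ 2 ^ #S ≤ dens (partialDoubling e D S) := by
  induction S using Finset.induction_on with
  | empty =>
    have h : Injective fun u => e (u, false) := e.injective.comp (Prod.mk_left_injective false)
    rw [Finset.card_empty, pow_zero, pow_one, ← dens_filter_comp_mem h D]
    refine dens_mono fun x hx => ?_
    simp only [partialDoubling, mem_filter_univ, notMem_empty, imp_false, Bool.not_eq_true] at *
    intro s hs
    simpa only [hs, comp_def] using hx
  | insert a S ha ih =>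
    have hne : e (a, true) ≠ e (a, false) := by simp
    calc dens D ^ 2 ^ #(insert a S)
        = (dens D ^ 2 ^ #S) ^ 2 := by rw [card_insert_of_notMem ha, pow_succ, pow_mul]
      _ ≤ dens (partialDoubling e D S) ^ 2 := by gcongr
      _ = dens {x | x ∈ partialDoubling e D S} ^ 2 := by rw [filter_univ_mem]
      _ ≤ _ := sq_dens_filter_le hne (update_mem_partialDoubling_iff ha)
      _ ≤ dens (partialDoubling e D (insert a S)) := dens_mono fun x hx =>
          have ⟨h, h'⟩ := (mem_filter_univ x).1 hx
          mem_partialDoubling_insert h h'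

theorem dens_pow_le_dens_doubling [Nonempty A] :
    dens D ^ 2 ^ Fintype.card κ ≤ dens (doubling e D) := by
  rw [← partialDoubling_univ, ← card_univ]
  exact dens_pow_le_dens_partialDoubling univ

end

end Density

section Tree

open Finset Function

/-- The `n`-th level of the full binary tree. -/
abbrev Level (n : ℕ) : Type := Fin n → Bool

/-- The node of level `n` on the branch `f` of the binary tree. -/
def truncate (n : ℕ) (f : ℕ → Bool) : Level n := fun i => f i

theorem truncate_eq_truncate_iff {n : ℕ} {f g : ℕ → Bool} :
    truncate n f = truncate n g ↔ ∀ a < n, f a = g a := by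
  simp only [truncate, funext_iff, Fin.forall_iff]

theorem truncate_surjective (n : ℕ) : Surjective (truncate n) := fun u =>
  ⟨fun a => if h : a < n then u ⟨a, h⟩ else false, by
    ext i
    simp [truncate]⟩

theorem eventually_injOn_truncate {F : Set (ℕ → Bool)} (hF : F.Finite) :
    ∀ᶠ k in Filter.atTop, Set.InjOn (truncate k) F := by
  have separated (f g : ℕ → Bool) : ∀ᶠ k in Filter.atTop, truncate k f = truncate k g → f = g := by
    rcases eq_or_ne f g with rfl | hfg
    · simp
    obtain ⟨a, ha⟩ := ne_iff.1 hfg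
    filter_upwards [Filter.eventually_gt_atTop a] with k hk h
    exact absurd (truncate_eq_truncate_iff.1 h a hk) ha
  simp only [Set.InjOn]
  rw [Filter.eventually_all_finite hF]
  exact fun f _ => (Filter.eventually_all_finite hF).2 fun g _ => separated f g

theorem exists_rightInverse_leftInvOn {α β : Type*} {f : α → β} {F : Set α} (hf : Surjective f)
    (hF : Set.InjOn f F) : ∃ s : β → α, RightInverse s f ∧ Set.LeftInvOn s f F := by
  classical
  rcases isEmpty_or_nonempty α with _ | _
  · exact ⟨surjInv hf, rightInverse_surjInv hf, fun a => isEmptyElim a⟩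
  refine ⟨(f '' F).piecewise (invFunOn f F) (surjInv hf), fun b => ?_, fun a ha => ?_⟩
  · by_cases hb : b ∈ f '' F
    · rw [Set.piecewise_eq_of_mem _ _ _ hb, invFunOn_eq hb]
    · rw [Set.piecewise_eq_of_notMem _ _ _ hb, surjInv_eq hf]
  · rw [Set.piecewise_eq_of_mem _ _ _ (Set.mem_image_of_mem f ha), hF.leftInvOn_invFunOn ha]

/-- The nodes of level `n + 1` are the two successors of the nodes of level `n`. -/
def levelSuccEquiv (n : ℕ) : Level n × Bool ≃ Level (n + 1) :=
  (Equiv.prodComm _ _).trans (Fin.snocEquiv fun _ => Bool)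

theorem levelSuccEquiv_truncate (n : ℕ) (f : ℕ → Bool) :
    levelSuccEquiv n (truncate n f, f n) = truncate (n + 1) f :=
  Fin.snoc_init_self (truncate (n + 1) f)

variable {A : Type*} [Fintype A]

section

variable [DecidableEq A]

/-- The labellings of level `n` such that, for `k ≤ n`, none of the labellings of level `k` obtained
by choosing above each node of level `k` a node of level `n` belongs to `Bad k`. -/
def goodLabels (Bad : ∀ n, Finset (Level n → A)) : ∀ n, Finset (Level n → A)
  | 0 => univ \ Bad 0
  | n + 1 => doubling (levelSuccEquiv n) (goodLabels Bad n) \ Bad (n + 1)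

theorem notMem_of_mem_goodLabels {Bad : ∀ n, Finset (Level n → A)} {n : ℕ} {x : Level n → A}
    (hx : x ∈ goodLabels Bad n) : x ∉ Bad n := by
  cases n <;> exact (mem_sdiff.1 hx).2

theorem comp_mem_goodLabels {Bad : ∀ n, Finset (Level n → A)} {k n : ℕ} (hkn : k ≤ n)
    {s : Level k → ℕ → Bool} (hs : RightInverse s (truncate k)) {x : Level n → A}
    (hx : x ∈ goodLabels Bad n) : (fun u => x (truncate n (s u))) ∈ goodLabels Bad k := by
  induction n, hkn using Nat.le_induction with
  | base => simpa only [hs _] using hx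
  | succ n hkn ih =>
    have hinj : Injective fun u => truncate n (s u) := fun u v huv => by
      rw [← hs u, ← hs v, truncate_eq_truncate_iff]
      exact fun a ha => truncate_eq_truncate_iff.1 huv a (ha.trans_le hkn)
    have hdoubled : x ∈ doubling (levelSuccEquiv n) (goodLabels Bad n) := (mem_sdiff.1 hx).1
    have key := ih ((mem_filter_univ x).1 hdoubled
      (extend (fun u => truncate n (s u)) (fun u => s u n) fun _ => false))
    simpa only [hinj.extend_apply, levelSuccEquiv_truncate] using key

/-- Densities small enough that excluding at each level `k` a set of labellings of density at most
`badThreshold k` always leaves some good labellings. -/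
def badThreshold : ℕ → ℚ≥0
  | 0 => 1 / 2
  | n + 1 => badThreshold n ^ 2 ^ Fintype.card (Level n) / 2

theorem badThreshold_pos : ∀ n, 0 < badThreshold n
  | 0 => by simp [badThreshold]
  | n + 1 => half_pos (pow_pos (badThreshold_pos n) _)

theorem le_dens_sdiff {X : Type*} [Fintype X] [DecidableEq X] {D B : Finset X} {ε : ℚ≥0}
    (hD : 2 * ε ≤ dens D) (hB : dens B ≤ ε) : ε ≤ dens (D \ B) := by
  have h : dens D ≤ dens (D \ B) + dens B := dens_le_dens_sdiff_add_dens
  refine le_of_add_le_add_right (a := ε) ?_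
  calc ε + ε = 2 * ε := (two_mul ε).symm
    _ ≤ dens (D \ B) + dens B := hD.trans h
    _ ≤ dens (D \ B) + ε := by gcongr

theorem badThreshold_le_dens_goodLabels [Nonempty A] {Bad : ∀ n, Finset (Level n → A)} {n : ℕ}
    (hBad : ∀ k ≤ n, dens (Bad k) ≤ badThreshold k) :
    badThreshold n ≤ dens (goodLabels Bad n) := by
  induction n with
  | zero => exact le_dens_sdiff (by simp [badThreshold]) (hBad 0 le_rfl)
  | succ n ih =>
    refine le_dens_sdiff ?_ (hBad (n + 1) le_rfl)
    calc 2 * badThreshold (n + 1)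
        = badThreshold n ^ 2 ^ Fintype.card (Level n) := mul_div_cancel₀ _ two_ne_zero
      _ ≤ dens (goodLabels Bad n) ^ 2 ^ Fintype.card (Level n) :=
          pow_le_pow_left' (ih fun k hk => hBad k (hk.trans n.le_succ)) _
      _ ≤ dens (doubling (levelSuccEquiv n) (goodLabels Bad n)) := dens_pow_le_dens_doubling

end

theorem exists_labels_notMem [Nonempty A] {Bad : ∀ n, Finset (Level n → A)} {n : ℕ}
    (hBad : ∀ k ≤ n, dens (Bad k) ≤ badThreshold k) :
    ∃ x : Level n → A, ∀ k ≤ n, ∀ s : Level k → ℕ → Bool, RightInverse s (truncate k) →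
      (fun u => x (truncate n (s u))) ∉ Bad k := by
  classical
  obtain ⟨x, hx⟩ : (goodLabels Bad n).Nonempty :=
    dens_pos.1 ((badThreshold_pos n).trans_le (badThreshold_le_dens_goodLabels hBad))
  exact ⟨x, fun k hk s hs => notMem_of_mem_goodLabels (comp_mem_goodLabels hk hs hx)⟩

end Tree

section GenericLabels

open Finset Function

/-- The sets `S` and `T` have the same elements below `i`. -/
def AgreeBelow (i : ℕ) (S T : Set ℕ) : Prop := ∀ l < i, (l ∈ S ↔ l ∈ T)

variable {N : Type*} (code : N → Set ℕ)

open Classical in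
/-- The labellings of `κ` by binary words of length `m`, read as elements of `N` via `num`, for
which the code of the label of `σ` agrees below `i` with that of the value of `g` at the labels of
`ρ`. -/
noncomputable def predictedLabels {κ : Type*} [Fintype κ] [DecidableEq κ] {m p : ℕ}
    (num : (Fin m → Bool) → N) (i : ℕ) (g : (Fin p → N) → N) (ρ : Fin p → κ) (σ : κ) :
    Finset (κ → Fin m → Bool) :=
  {y | AgreeBelow i (code (num (y σ))) (code (g fun q => num (y (ρ q))))}

variable {code}

theorem mem_predictedLabels {κ : Type*} [Fintype κ] [DecidableEq κ] {m p i : ℕ}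
    {num : (Fin m → Bool) → N} {g : (Fin p → N) → N} {ρ : Fin p → κ} {σ : κ}
    {y : κ → Fin m → Bool} : y ∈ predictedLabels code num i g ρ σ ↔
      AgreeBelow i (code (num (y σ))) (code (g fun q => num (y (ρ q)))) := by
  simp only [predictedLabels, mem_filter_univ]

theorem dens_predictedLabels_le {κ : Type*} [Fintype κ] [DecidableEq κ] {m p i : ℕ} (hi : i ≤ m)
    {num : (Fin m → Bool) → N} (hnum : ∀ w (l : Fin m), ↑l ∈ code (num w) ↔ w l = true)
    (g : (Fin p → N) → N) {ρ : Fin p → κ} {σ : κ} (hσ : σ ∉ Set.range ρ) :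
    dens (predictedLabels code num i g ρ σ) ≤ 1 / 2 ^ i := by
  classical
  have hρ (q) : ρ q ≠ σ := fun hq => hσ ⟨q, hq⟩
  refine dens_filter_le_of_forall_update _ σ fun y => ?_
  let predicted (l : ℕ) : Bool := decide (l ∈ code (g fun q => num (y (ρ q))))
  rw [← dens_filter_forall_lt_eq hi predicted]
  refine dens_mono fun z hz => ?_
  rw [mem_filter_univ] at hz ⊢
  simp only [update_self, update_of_ne (hρ _)] at hz
  intro l hl
  rw [Bool.eq_iff_iff, decide_eq_true_iff, ← hnum z l]
  exact hz l hl

variable (code) (h : ℕ → Σ p, (Fin p → N) → N)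

/-- The predictions at level `k`: one of the first `k` functions, with the nodes of level `k` from
which it reads its arguments and another node, whose label it predicts. -/
def Prediction (k : ℕ) : Type :=
  Σ j : Fin k, {r : (Fin (h j).1 → Level k) × Level k // r.2 ∉ Set.range r.1}

noncomputable instance (k : ℕ) : Fintype (Prediction h k) := by
  classical
  unfold Prediction
  infer_instance

open Classical in
/-- The labellings of level `k` for which some prediction is correct below `i`. -/
noncomputable def predictableLabels {m : ℕ} (num : (Fin m → Bool) → N) (i k : ℕ) :
    Finset (Level k → Fin m → Bool) :=
  univ.biUnion fun r : Prediction h k =>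
    predictedLabels code num i (h r.1).2 r.2.1.1 r.2.1.2

variable {code h}

theorem dens_predictableLabels_le {m i : ℕ} (hi : i ≤ m) {num : (Fin m → Bool) → N}
    (hnum : ∀ w (l : Fin m), ↑l ∈ code (num w) ↔ w l = true) (k : ℕ) :
    dens (predictableLabels code h num i k) ≤ Fintype.card (Prediction h k) * (1 / 2 ^ i) := by
  classical
  calc dens (predictableLabels code h num i k)
      ≤ ∑ r : Prediction h k, dens (predictedLabels code num i (h r.1).2 r.2.1.1 r.2.1.2) :=
        dens_biUnion_le
    _ ≤ ∑ _r : Prediction h k, 1 / 2 ^ i :=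
        sum_le_sum fun r _ => dens_predictedLabels_le hi hnum _ r.2.2
    _ = Fintype.card (Prediction h k) * (1 / 2 ^ i) := by
        rw [sum_const, nsmul_eq_mul, card_univ]

theorem exists_mul_one_div_two_pow_le (c : ℕ) {ε : ℚ≥0} (hε : 0 < ε) :
    ∃ i : ℕ, c * (1 / 2 ^ i : ℚ≥0) ≤ ε := by
  obtain ⟨i, hi⟩ := exists_nat_gt (c / ε)
  refine ⟨i, ?_⟩
  rw [mul_one_div, div_le_iff₀ (by positivity), ← div_le_iff₀' hε]
  exact hi.le.trans (mod_cast i.lt_two_pow_self.le)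

theorem exists_generic_labels
    (hcode : ∀ m (w : Fin m → Bool), ∃ x, ∀ l : Fin m, ↑l ∈ code x ↔ w l = true) :
    ∃ x : ∀ n, Level n → N, ∀ (j : ℕ) (ρ : Fin (h j).1 → ℕ → Bool), ∀ f ∉ Set.range ρ,
      ∃ i, ∀ᶠ n in Filter.atTop, ¬ AgreeBelow i (code (x n (truncate n f)))
        (code ((h j).2 fun q => x n (truncate n (ρ q)))) := by
  choose num hnum using hcode
  choose i hi using fun k =>
    exists_mul_one_div_two_pow_le (Fintype.card (Prediction h k)) (badThreshold_pos k)
  let m (n : ℕ) : ℕ := (range (n + 1)).sup i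
  have hBad (n k : ℕ) (hk : k ≤ n) :
      dens (predictableLabels code h (num (m n)) (i k) k) ≤ badThreshold k :=
    (dens_predictableLabels_le (le_sup (mem_range_succ_iff.2 hk)) (hnum _) k).trans (hi k)
  choose y hy using fun n => exists_labels_notMem (hBad n)
  refine ⟨fun n u => num (m n) (y n u), fun j ρ f hf => ?_⟩
  obtain ⟨k, hk, hjk⟩ := ((eventually_injOn_truncate ((Set.finite_range ρ).insert f)).and
    (Filter.eventually_gt_atTop j)).exists
  obtain ⟨s, hs, hsF⟩ := exists_rightInverse_leftInvOn (truncate_surjective k) hk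
  have hsf : s (truncate k f) = f := hsF (Set.mem_insert _ _)
  have hsρ (q) : s (truncate k (ρ q)) = ρ q := hsF (Set.mem_insert_of_mem _ ⟨q, rfl⟩)
  have hfρ : truncate k f ∉ Set.range fun q => truncate k (ρ q) := fun ⟨q, hq⟩ =>
    hf ⟨q, hk (Set.mem_insert_of_mem _ ⟨q, rfl⟩) (Set.mem_insert _ _) hq⟩
  refine ⟨i k, Filter.eventually_atTop.2 ⟨k, fun n hkn hagree => hy n k hkn s hs ?_⟩⟩
  refine mem_biUnion.2 ⟨⟨⟨j, hjk⟩, (fun q => truncate k (ρ q), truncate k f), hfρ⟩, mem_univ _, ?_⟩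
  rw [mem_predictedLabels]
  simpa only [hsf, hsρ] using hagree

end GenericLabels

section SkolemHull

open FirstOrder FirstOrder.Language Cardinal

universe u v w

variable {L : FirstOrder.Language.{u, v}} {M : Type w}

/-- The symbol of the Skolem function of `φ`. -/
def skolemFunction {n : ℕ} (φ : L.BoundedFormula Empty (n + 1)) : (L.sum L.skolem₁).Functions n :=
  LHom.sumInr.onFunction φ

/-- The sentence `∀ x, (∃ y, φ(x, y)) → ∃ y, y = F(x) ∧ φ(x, y)`, where `F` is the Skolem function
of `φ`. -/
noncomputable def skolemSentence {n : ℕ} (φ : L.BoundedFormula Empty (n + 1)) :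
    (L.sum L.skolem₁).Sentence :=
  let φ' : (L.sum L.skolem₁).BoundedFormula Empty (n + 1) := LHom.sumInl.onBoundedFormula φ
  (φ'.ex.imp ((Term.bdEqual (Term.var (Sum.inr (Fin.last n)))
    (Term.func (skolemFunction φ) fun i => Term.var (Sum.inr i.castSucc))) ⊓ φ').ex).alls

variable (L) in
/-- The theory stating that the functions of `L.skolem₁` are Skolem functions for the formulas
of `L`. -/
def skolemTheory : (L.sum L.skolem₁).Theory :=
  {ψ | ∃ (n : ℕ) (φ : L.BoundedFormula Empty (n + 1)), ψ = skolemSentence φ}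

variable [L.Structure M] [(L.sum L.skolem₁).Structure M]
  [(LHom.sumInl : L →ᴸ L.sum L.skolem₁).IsExpansionOn M]

theorem realize_skolemSentence {n : ℕ} {φ : L.BoundedFormula Empty (n + 1)} :
    M ⊨ skolemSentence φ ↔ ∀ (x : Fin n → M) (a : M), φ.Realize default (Fin.snoc x a) →
      φ.Realize default (Fin.snoc x (Structure.funMap (skolemFunction φ) x)) := by
  refine BoundedFormula.realize_alls.trans ?_
  simp only [BoundedFormula.realize_imp, BoundedFormula.realize_ex, BoundedFormula.realize_inf,
    BoundedFormula.realize_bdEqual, LHom.realize_onBoundedFormula, Term.realize_var,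
    Term.realize_func, Sum.elim_inr, Fin.snoc_last, Fin.snoc_castSucc, exists_eq_left,
    forall_exists_index]

theorem skolemTheory_model_skolem₁ {N : Type*} [L.Structure N] [Nonempty N] :
    N ⊨ skolemTheory L := by
  refine (Theory.model_iff _).2 ?_
  rintro _ ⟨n, φ, rfl⟩
  refine realize_skolemSentence.2 fun x a h => ?_
  exact Classical.epsilon_spec (p := fun a => φ.Realize default (Fin.snoc x a : _ → N)) ⟨a, h⟩

variable (L) [M ⊨ skolemTheory L]

/-- The Skolem hull of `s`: the closure of `s` under the functions of `L` and the Skolem functions,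
an elementary substructure by the Tarski–Vaught test. -/
def skolemHull (s : Set M) : L.ElementarySubstructure M :=
  (LHom.sumInl.substructureReduct
    (Substructure.closure (L.sum L.skolem₁) s)).toElementarySubstructure fun n φ x a h => by
      have hφ : M ⊨ skolemSentence φ := Theory.realize_sentence_of_mem (skolemTheory L) ⟨n, φ, rfl⟩
      exact ⟨⟨_, (Substructure.closure (L.sum L.skolem₁) s).fun_mem (skolemFunction φ) _
        fun i => (x i).2⟩, realize_skolemSentence.1 hφ _ a h⟩

variable {L}

theorem mem_skolemHull_iff {s : Set M} {z : M} :
    z ∈ skolemHull L s ↔ z ∈ Substructure.closure (L.sum L.skolem₁) s :=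
  Iff.rfl

theorem subset_skolemHull (s : Set M) : s ⊆ skolemHull L s :=
  Substructure.subset_closure (L := L.sum L.skolem₁)

theorem skolemHull_mono {s t : Set M} (h : s ⊆ t) :
    (skolemHull L s : Set M) ⊆ skolemHull L t :=
  Substructure.closure_mono (L := L.sum L.skolem₁) h

theorem mk_skolemHull_le [Countable L.Symbols] (s : Set M) : #(skolemHull L s) ≤ max ℵ₀ #s := by
  have functions_countable : #(Σ n, (L.sum L.skolem₁).Functions n) ≤ ℵ₀ :=
    card_functions_sum_skolem₁_le.trans (max_le le_rfl mk_le_aleph0)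
  refine Cardinal.lift_le.1 (Substructure.lift_card_closure_le.trans ?_)
  rw [lift_max, lift_aleph0]
  refine max_le (le_max_left _ _) (add_le_of_le (le_max_left _ _) (le_max_right _ _) ?_)
  exact (lift_le_aleph0.2 functions_countable).trans (le_max_left _ _)

theorem mk_skolemHull_union_image_le [Countable L.Symbols] {ι : Type w} {A : Set M}
    (hA : A.Countable) (c : ι → M) {T : Set ι} (hT : T.Infinite) :
    #(skolemHull L (A ∪ c '' T)) ≤ #T := by
  have hT' : ℵ₀ ≤ #T := infinite_iff.1 hT.to_subtype
  exact (mk_skolemHull_le _).trans <| max_le hT' <| (mk_union_le _ _).trans <|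
    add_le_of_le hT' ((le_aleph0_iff_set_countable.2 hA).trans hT') mk_image_le

end SkolemHull

section Ultrapower

open FirstOrder FirstOrder.Language Filter

/-- The ultrapower of `N` by `U`. -/
abbrev Ultrapower {γ : Type*} (U : Ultrafilter γ) (N : Type*) : Type _ :=
  (U : Filter γ).Product fun _ => N

/-- The element of the ultrapower represented by a sequence. -/
abbrev Ultrapower.mk {γ : Type*} (U : Ultrafilter γ) {N : Type*} (x : γ → N) : Ultrapower U N :=
  (x : (U : Filter γ).Product fun _ => N)

variable {L : FirstOrder.Language} {γ : Type*} {U : Ultrafilter γ} {N : Type*} [L.Structure N]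
  [Nonempty N]

/- This takes precedence over `sumStructure`, which would choose Skolem functions on the ultrapower
afresh: Łoś's theorem needs them to be computed pointwise. -/
noncomputable instance : (L.sum L.skolem₁).Structure (Ultrapower U N) :=
  Ultraproduct.structure

instance : (LHom.sumInl : L →ᴸ L.sum L.skolem₁).IsExpansionOn (Ultrapower U N) where
  map_onFunction _ _ := rfl
  map_onRelation _ _ := rfl

instance : Ultrapower U N ⊨ skolemTheory L :=
  (Theory.model_iff _).2 fun ψ hψ => (Ultraproduct.sentence_realize ψ).2 <|
    Eventually.of_forall fun _ => (Theory.model_iff _).1 skolemTheory_model_skolem₁ ψ hψ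

variable (L U N) in
/-- The diagonal embedding of `N` into its ultrapower. -/
def diagonal : N ↪ₑ[L] Ultrapower U N where
  toFun a := Ultrapower.mk U fun _ => a
  map_formula' _ φ x :=
    (Ultraproduct.realize_formula_cast φ fun i (_ : γ) => x i).trans eventually_const

theorem Ultrapower.term_realize {α : Type*} (t : (L.sum L.skolem₁).Term (α ⊕ N)) (x : α → γ → N) :
    t.realize (Sum.elim (fun q => mk U (x q)) (diagonal L U N)) =
      mk U fun k => t.realize (Sum.elim (fun q => x q k) id) := by
  have coordinates : Sum.elim (fun q => mk U (x q)) (diagonal L U N) =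
      fun i => mk U (Sum.elim x (fun a _ => a) i) := by
    ext (q | a) <;> rfl
  rw [coordinates]
  refine (Ultraproduct.term_realize_cast (M := fun _ => N) _ t).trans ?_
  congr! 3 with k
  ext (q | a) <;> rfl

end Ultrapower

section CodedSets

open FirstOrder FirstOrder.Language

variable {L : FirstOrder.Language} {M M' : Type*} [L.Structure M] [L.Structure M']
  (δ : ℕ → L.Formula (Fin 1))

/-- The set of natural numbers coded by `a`, where `δ i` says of an element that its code contains
`i`. -/
def codedSet (a : M) : Set ℕ := {i | (δ i).Realize fun _ => a}

variable {δ}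

theorem codedSet_map (g : M ↪ₑ[L] M') (a : M) : codedSet δ (g a) = codedSet δ a :=
  Set.ext fun i => g.map_formula (δ i) fun _ => a

theorem Ultrapower.mem_codedSet {γ : Type*} {U : Ultrafilter γ} [Nonempty M] {x : γ → M} {i : ℕ} :
    i ∈ codedSet δ (mk U x) ↔ ∀ᶠ k in (U : Filter γ), i ∈ codedSet δ (x k) :=
  Ultraproduct.realize_formula_cast (δ i) fun _ => x

theorem Ultrapower.eventually_agreeBelow {γ : Type*} {U : Ultrafilter γ} [Nonempty M]
    {x y : γ → M} (h : codedSet δ (mk U x) = codedSet δ (mk U y))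
    (b : ℕ) : ∀ᶠ k in (U : Filter γ), AgreeBelow b (codedSet δ (x k)) (codedSet δ (y k)) := by
  refine (Filter.eventually_all_finite (Set.finite_Iio b)).2 fun l _ => ?_
  have hl := Set.ext_iff.1 h l
  rw [mem_codedSet, mem_codedSet] at hl
  simpa only [iff_iff_implies_and_implies, Filter.eventually_and, Ultrafilter.eventually_imp]
    using hl

end CodedSets

section GenericFamily

open FirstOrder FirstOrder.Language Filter

variable {L : FirstOrder.Language}

/-- A family `c` is generic over `A` if no element of the Skolem hull of `A` and some members of
the family codes the same set as another member. -/
def IsGenericOver {M ι : Type*} [L.Structure M] [(L.sum L.skolem₁).Structure M]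
    [(LHom.sumInl : L →ᴸ L.sum L.skolem₁).IsExpansionOn M] [M ⊨ skolemTheory L]
    (δ : ℕ → L.Formula (Fin 1)) (A : Set M) (c : ι → M) : Prop :=
  ∀ (T : Set ι), ∀ f ∉ T, ∀ z ∈ skolemHull L (A ∪ c '' T), codedSet δ z ≠ codedSet δ (c f)

theorem exists_term_realize_of_mem_closure {M ι κ : Type*} [L.Structure M] {c : ι → M} {d : κ → M}
    {z : M} (hz : z ∈ Substructure.closure L (Set.range d ∪ Set.range c)) :
    ∃ (p : ℕ) (ρ : Fin p → ι) (t : L.Term (Fin p ⊕ κ)), t.realize (Sum.elim (c ∘ ρ) d) = z := by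
  classical
  rw [Set.union_comm, ← Set.Sum.elim_range] at hz
  obtain ⟨t, rfl⟩ := Substructure.mem_closure_iff_exists_term.1 hz
  choose g hg using fun a : Set.range (Sum.elim c d) => a.2
  let e := (t.relabel g).varFinsetLeft.equivFin
  refine ⟨_, fun q => e.symm q, (t.relabel g).restrictVarLeft e, ?_⟩
  rw [Term.realize_restrictVarLeft c (by simp), Term.realize_relabel]
  exact congrArg t.realize (funext hg)

theorem exists_generic_sequences {N : Type*} [L.Structure N] [Nonempty N] [Countable N]
    [Countable (Σ n, L.Functions n)] {code : N → Set ℕ}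
    (hcode : ∀ m (w : Fin m → Bool), ∃ x, ∀ l : Fin m, ↑l ∈ code x ↔ w l = true) :
    ∃ y : (ℕ → Bool) → ℕ → N, ∀ (p : ℕ) (t : L.Term (Fin p ⊕ N)) (ρ : Fin p → ℕ → Bool),
      ∀ f ∉ Set.range ρ, ∃ i, ∀ᶠ n in atTop, ¬ AgreeBelow i (code (y f n))
        (code (t.realize (Sum.elim (fun q => y (ρ q) n) id))) := by
  have : Nonempty (Σ p, L.Term (Fin p ⊕ N)) := ⟨0, Term.var (Sum.inr (Classical.arbitrary N))⟩
  obtain ⟨t, ht⟩ := exists_surjective_nat (Σ p, L.Term (Fin p ⊕ N))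
  obtain ⟨x, hx⟩ := exists_generic_labels
    (h := fun j => ⟨(t j).1, fun v => (t j).2.realize (Sum.elim v id)⟩) hcode
  refine ⟨fun f n => x n (truncate n f), fun p s => ?_⟩
  obtain ⟨j, hj⟩ := ht ⟨p, s⟩
  have hxj := hx j
  rw [hj] at hxj
  exact hxj

theorem exists_isGenericOver {N : Type*} [L.Structure N] [Nonempty N] [Countable N]
    [Countable L.Symbols] {δ : ℕ → L.Formula (Fin 1)}
    (hδ : ∀ m (w : Fin m → Bool), ∃ x : N, ∀ l : Fin m, ↑l ∈ codedSet δ x ↔ w l = true) :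
    ∃ c : (ℕ → Bool) → Ultrapower (hyperfilter ℕ) N,
      IsGenericOver δ (Set.range (diagonal L (hyperfilter ℕ) N)) c := by
  have : Countable (Σ n, (L.sum L.skolem₁).Functions n) :=
    Cardinal.mk_le_aleph0_iff.1
      (card_functions_sum_skolem₁_le.trans (max_le le_rfl Cardinal.mk_le_aleph0))
  obtain ⟨y, hy⟩ := exists_generic_sequences (L := L.sum L.skolem₁) hδ
  let c (f : ℕ → Bool) : Ultrapower (hyperfilter ℕ) N := Ultrapower.mk _ (y f)
  refine ⟨c, fun T f hf z hz hzf => ?_⟩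
  rw [mem_skolemHull_iff, Set.image_eq_range] at hz
  obtain ⟨p, ρ, t, rfl⟩ := exists_term_realize_of_mem_closure hz
  have ht : t.realize (Sum.elim ((fun f : T => c f) ∘ ρ) (diagonal L (hyperfilter ℕ) N)) =
      Ultrapower.mk _ fun n => t.realize (Sum.elim (fun q => y (ρ q) n) id) :=
    Ultrapower.term_realize t fun q => y (ρ q)
  rw [ht] at hzf
  obtain ⟨i, hi⟩ := hy p t (fun q => ρ q) f fun ⟨q, hq⟩ => hf (hq ▸ (ρ q).2)
  have hyperfilter_le_atTop : (hyperfilter ℕ : Filter ℕ) ≤ atTop :=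
    Nat.cofinite_eq_atTop ▸ hyperfilter_le_cofinite
  obtain ⟨n, hagree, hnot⟩ :=
    ((Ultrapower.eventually_agreeBelow hzf.symm i).and (hyperfilter_le_atTop hi)).exists
  exact hnot hagree

namespace IsGenericOver

variable {M ι : Type*} [L.Structure M] [(L.sum L.skolem₁).Structure M]
  [(LHom.sumInl : L →ᴸ L.sum L.skolem₁).IsExpansionOn M] [M ⊨ skolemTheory L]
  {δ : ℕ → L.Formula (Fin 1)} {A : Set M} {c : ι → M}

theorem exists_mem_skolemHull_codedSet_eq_iff (hc : IsGenericOver δ A c) {T : Set ι} {f : ι} :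
    (∃ z ∈ skolemHull L (A ∪ c '' T), codedSet δ z = codedSet δ (c f)) ↔ f ∈ T := by
  refine ⟨fun ⟨z, hz, hzf⟩ => ?_, fun hf => ?_⟩
  · by_contra hf
    exact hc T f hf z hz hzf
  · exact ⟨c f, subset_skolemHull _ (Or.inr (Set.mem_image_of_mem c hf)), rfl⟩

theorem codedSet_injective (hc : IsGenericOver δ A c) :
    Function.Injective fun f => codedSet δ (c f) := fun _ g hfg =>
  (hc.exists_mem_skolemHull_codedSet_eq_iff (T := {g})).1
    ⟨c g, subset_skolemHull _ (Or.inr (Set.mem_image_of_mem c (Set.mem_singleton g))), hfg.symm⟩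

end IsGenericOver

end GenericFamily

namespace Arith

section Robinson

/-- `M` is a model of Robinson arithmetic: Peano arithmetic with the induction scheme weakened to
the statement that every nonzero element is a successor. -/
structure IsRobinsonModel (M : Type*) [arith.Structure M] : Prop where
  add_zero (x : M) : addM x (zeroM M) = x
  add_succ (x y : M) : addM x (addM y (oneM M)) = addM (addM x y) (oneM M)
  mul_zero (x : M) : mulM x (zeroM M) = zeroM M
  mul_succ (x y : M) : mulM x (addM y (oneM M)) = addM (mulM x y) x
  not_lt_zero (x : M) : ¬ ltM x (zeroM M)
  lt_succ_iff (x y : M) : ltM x (addM y (oneM M)) ↔ ltM x y ∨ x = y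
  succ_ne_zero (x : M) : addM x (oneM M) ≠ zeroM M
  succ_inj (x y : M) : addM x (oneM M) = addM y (oneM M) → x = y
  eq_zero_or_succ (x : M) : x = zeroM M ∨ ∃ y, x = addM y (oneM M)

variable {M : Type*} [arith.Structure M]

theorem IsPAModel.isRobinsonModel (hM : IsPAModel M) : IsRobinsonModel M := by
  obtain ⟨add_zero, add_succ, mul_zero, mul_succ, not_lt_zero, lt_succ_iff, succ_ne_zero, succ_inj,
    induction⟩ := hM
  refine ⟨add_zero, add_succ, mul_zero, mul_succ, not_lt_zero, lt_succ_iff, succ_ne_zero, succ_inj,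
    fun x => ?_⟩
  by_contra! hx
  have definable : Set.Definable₁ (Set.univ : Set M) arith ({x}ᶜ : Set M) :=
    (Set.Definable.singleton_of_mem (L := arith) (Set.mem_univ x)).compl
  exact induction _ definable hx.1.symm (fun y _ hy => hx.2 y hy.symm) x rfl

namespace IsRobinsonModel

theorem addM_numeral (hM : IsRobinsonModel M) (m n : ℕ) :
    addM (numeral M m) (numeral M n) = numeral M (m + n) := by
  induction n with
  | zero => exact hM.add_zero _
  | succ n ih =>
    rw [numeral, hM.add_succ, ih]
    rfl

theorem mulM_numeral (hM : IsRobinsonModel M) (m n : ℕ) :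
    mulM (numeral M m) (numeral M n) = numeral M (m * n) := by
  induction n with
  | zero => exact hM.mul_zero _
  | succ n ih =>
    rw [numeral, hM.mul_succ, ih, hM.addM_numeral]
    rfl

theorem numeral_injective (hM : IsRobinsonModel M) : Function.Injective (numeral M) := by
  intro m
  induction m with
  | zero =>
    rintro (_ | n) h
    · rfl
    · exact absurd h.symm (hM.succ_ne_zero _)
  | succ m ih =>
    rintro (_ | n) h
    · exact absurd h (hM.succ_ne_zero _)
    · rw [ih (hM.succ_inj _ _ h)]

theorem ltM_numeral_iff (hM : IsRobinsonModel M) {x : M} {n : ℕ} :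
    ltM x (numeral M n) ↔ ∃ m < n, x = numeral M m := by
  induction n with
  | zero => simp [numeral, hM.not_lt_zero]
  | succ n ih =>
    simp only [numeral, hM.lt_succ_iff, ih, Nat.lt_succ_iff_lt_or_eq, or_and_right, exists_or,
      exists_eq_left]

theorem isStd_of_addM_eq_numeral (hM : IsRobinsonModel M) {x y : M} {n : ℕ}
    (h : addM x y = numeral M n) : IsStd x ∧ IsStd y := by
  induction n generalizing y with
  | zero =>
    rcases hM.eq_zero_or_succ y with rfl | ⟨y, rfl⟩
    · exact ⟨⟨0, hM.add_zero x ▸ h⟩, ⟨0, rfl⟩⟩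
    · exact absurd (hM.add_succ x y ▸ h) (hM.succ_ne_zero _)
  | succ n ih =>
    rcases hM.eq_zero_or_succ y with rfl | ⟨y, rfl⟩
    · exact ⟨⟨n + 1, hM.add_zero x ▸ h⟩, ⟨0, rfl⟩⟩
    · rw [hM.add_succ] at h
      obtain ⟨hx, m, rfl⟩ := ih (hM.succ_inj _ _ h)
      exact ⟨hx, ⟨m + 1, rfl⟩⟩

theorem isStd_of_mulM_eq_numeral (hM : IsRobinsonModel M) {x : M} {m n : ℕ} (hm : m ≠ 0)
    (h : mulM x (numeral M m) = numeral M n) : IsStd x := by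
  obtain ⟨m, rfl⟩ := Nat.exists_eq_succ_of_ne_zero hm
  rw [numeral, hM.mul_succ] at h
  exact (hM.isStd_of_addM_eq_numeral h).2

end IsRobinsonModel

theorem testBit_iff_exists_eq_add {a l : ℕ} :
    a.testBit l = true ↔ ∃ u v, v < 2 ^ l ∧ a = u * 2 ^ (l + 1) + (2 ^ l + v) := by
  have hpos := Nat.two_pow_pos l
  rw [Nat.testBit_eq_decide_div_mod_eq, decide_eq_true_iff]
  constructor
  · intro h
    refine ⟨a / 2 ^ l / 2, a % 2 ^ l, Nat.mod_lt _ hpos, ?_⟩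
    calc a = 2 ^ l * (a / 2 ^ l) + a % 2 ^ l := (Nat.div_add_mod a (2 ^ l)).symm
      _ = 2 ^ l * (2 * (a / 2 ^ l / 2) + 1) + a % 2 ^ l := by
        rw [← h, Nat.div_add_mod (a / 2 ^ l) 2]
      _ = a / 2 ^ l / 2 * 2 ^ (l + 1) + (2 ^ l + a % 2 ^ l) := by ring
  · rintro ⟨u, v, hv, rfl⟩
    have : u * 2 ^ (l + 1) + (2 ^ l + v) = v + 2 ^ l * (2 * u + 1) := by ring
    rw [this, Nat.add_mul_div_left _ _ hpos, Nat.div_eq_of_lt hv]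
    omega

theorem IsRobinsonModel.digitB_numeral (hM : IsRobinsonModel M) (a l : ℕ) :
    digitB (numeral M a) l ↔ a.testBit l = true := by
  rw [testBit_iff_exists_eq_add]
  constructor
  · rintro ⟨u, v, h, hv⟩
    obtain ⟨v, hvl, rfl⟩ := hM.ltM_numeral_iff.1 hv
    obtain ⟨b, hb⟩ := (hM.isStd_of_addM_eq_numeral h.symm).1
    obtain ⟨u, rfl⟩ := hM.isStd_of_mulM_eq_numeral (Nat.two_pow_pos _).ne' hb
    rw [hM.mulM_numeral, hM.addM_numeral, hM.addM_numeral] at h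
    exact ⟨u, v, hvl, hM.numeral_injective h⟩
  · rintro ⟨u, v, hv, rfl⟩
    refine ⟨numeral M u, numeral M v, ?_, hM.ltM_numeral_iff.2 ⟨v, hv, rfl⟩⟩
    rw [hM.mulM_numeral, hM.addM_numeral, hM.addM_numeral]

end Robinson

section Formulas

variable {M M' : Type*} [arith.Structure M] [arith.Structure M'] {α : Type*}

/-- The sum of two terms. -/
def addTerm (s t : arith.Term α) : arith.Term α :=
  Functions.apply₂ (show arith.Functions 2 from arithFunc.add) s t

/-- The product of two terms. -/
def mulTerm (s t : arith.Term α) : arith.Term α :=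
  Functions.apply₂ (show arith.Functions 2 from arithFunc.mul) s t

/-- The closed term denoting the numeral `n`. -/
def numeralTerm (α : Type*) : ℕ → arith.Term α
  | 0 => Constants.term (show arith.Constants from arithFunc.zero)
  | n + 1 => addTerm (numeralTerm α n) (Constants.term (show arith.Constants from arithFunc.one))

/-- The formula expressing that one term is less than another. -/
def ltFormula {n : ℕ} (s t : arith.Term (α ⊕ Fin n)) : arith.BoundedFormula α n :=
  Relations.boundedFormula₂ (show arith.Relations 2 from arithRel.lt) s t

theorem realize_addTerm (s t : arith.Term α) (v : α → M) :
    (addTerm s t).realize v = addM (s.realize v) (t.realize v) :=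
  Term.realize_functions_apply₂

theorem realize_mulTerm (s t : arith.Term α) (v : α → M) :
    (mulTerm s t).realize v = mulM (s.realize v) (t.realize v) :=
  Term.realize_functions_apply₂

theorem realize_numeralTerm (v : α → M) (n : ℕ) :
    (numeralTerm α n).realize v = numeral M n := by
  induction n with
  | zero =>
    exact Term.realize_constants.trans
      (congrArg (Structure.funMap (L := arith) arithFunc.zero) (Subsingleton.elim _ _))
  | succ n ih =>
    rw [numeralTerm, realize_addTerm, ih, numeral]
    exact congrArg _ (Term.realize_constants.trans
      (congrArg (Structure.funMap (L := arith) arithFunc.one) (Subsingleton.elim _ _)))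

theorem realize_ltFormula {n : ℕ} (s t : arith.Term (α ⊕ Fin n)) (v : α → M) (xs : Fin n → M) :
    (ltFormula s t).Realize v xs ↔
      ltM (s.realize (Sum.elim v xs)) (t.realize (Sum.elim v xs)) :=
  BoundedFormula.realize_rel₂

/-- The formula expressing that the `i`-th binary digit of the variable is `1`. -/
def digitFormula (i : ℕ) : arith.Formula (Fin 1) :=
  BoundedFormula.ex (BoundedFormula.ex
    (Term.bdEqual (Term.var (Sum.inl 0))
        (addTerm (mulTerm (Term.var (Sum.inr 0)) (numeralTerm _ (2 ^ (i + 1))))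
          (addTerm (numeralTerm _ (2 ^ i)) (Term.var (Sum.inr 1)))) ⊓
      ltFormula (Term.var (Sum.inr 1)) (numeralTerm _ (2 ^ i))))

theorem mem_codedSet_digitFormula {a : M} {i : ℕ} : i ∈ codedSet digitFormula a ↔ digitB a i := by
  simp only [codedSet, Set.mem_ofPred_eq, digitFormula, Formula.Realize, BoundedFormula.realize_ex,
    BoundedFormula.realize_inf, BoundedFormula.realize_bdEqual, realize_ltFormula, realize_addTerm,
    realize_mulTerm, realize_numeralTerm, Term.realize_var]
  rfl

theorem IsRobinsonModel.exists_mem_codedSet_digitFormula_iff (hM : IsRobinsonModel M) (m : ℕ)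
    (w : Fin m → Bool) : ∃ x : M, ∀ l : Fin m, ↑l ∈ codedSet digitFormula x ↔ w l = true := by
  refine ⟨numeral M (Nat.ofBits w), fun l => ?_⟩
  rw [mem_codedSet_digitFormula, hM.digitB_numeral, Nat.testBit_ofBits_lt]

theorem map_numeral (g : M ↪ₑ[arith] M') (n : ℕ) : g (numeral M n) = numeral M' n := by
  have := HomClass.realize_term g (t := numeralTerm Empty n) (v := Empty.elim)
  rw [realize_numeralTerm, realize_numeralTerm] at this
  exact this.symm

theorem isStd_map (g : M ↪ₑ[arith] M') (a : M) : IsStd (g a) ↔ IsStd a := by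
  refine exists_congr fun n => ?_
  rw [← map_numeral g, g.injective.eq_iff]

theorem mem_of_isStd {S : arith.ElementarySubstructure M} {a : M} (ha : IsStd a) : a ∈ S := by
  obtain ⟨n, rfl⟩ := ha
  exact map_numeral S.subtype n ▸ (numeral S n).2

instance : Countable arith.Symbols := by
  have (n : ℕ) : Countable (arith.Functions n) :=
    Function.Injective.countable (f := arithFunc.ctorIdx) fun a b h => by
      cases a <;> cases b <;> first | rfl | simp [arithFunc.ctorIdx] at h
  have (n : ℕ) : Countable (arith.Relations n) :=
    Function.Injective.countable (f := arithRel.ctorIdx) fun a b _ => by cases a; cases b; rfl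
  exact inferInstanceAs (Countable ((Σ n, arith.Functions n) ⊕ (Σ n, arith.Relations n)))

end Formulas

section StandardSystem

open Cardinal

variable {M : Type*} [arith.Structure M]

theorem mem_SSy_iff {S : arith.ElementarySubstructure M} {A : Set ℕ} :
    A ∈ SSy S ↔ ∃ a ∈ S, ¬ IsStd a ∧ codedSet digitFormula a = A := by
  have codes (a : S) : (∀ i, i ∈ A ↔ digitB a i) ↔ codedSet digitFormula (a : M) = A := by
    rw [← S.subtype_apply, codedSet_map, eq_comm, Set.ext_iff]
    simp only [mem_codedSet_digitFormula]
  simp only [SSy, Set.mem_ofPred_eq, codes, ← isStd_map S.subtype, S.subtype_apply, Subtype.exists,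
    exists_prop]

theorem SSy_mono {S S' : arith.ElementarySubstructure M} (h : (S : Set M) ⊆ S') :
    SSy S ⊆ SSy S' := fun _ hA =>
  have ⟨a, ha, hA⟩ := mem_SSy_iff.1 hA
  mem_SSy_iff.2 ⟨a, h ha, hA⟩

theorem mk_SSy_le {M : Type} [arith.Structure M] : #(SSy M) ≤ #M := by
  refine (mk_le_mk_of_subset (t := Set.range fun a : M => {i | digitB a i}) ?_).trans
    mk_range_le
  rintro A ⟨a, -, hA⟩
  exact ⟨a, Set.ext fun i => (hA i).symm⟩

end StandardSystem

end Arith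

namespace IsGenericOver

open Arith Cardinal

variable {M ι : Type} [arith.Structure M] [(arith.sum arith.skolem₁).Structure M]
  [(LHom.sumInl : arith →ᴸ arith.sum arith.skolem₁).IsExpansionOn M] [M ⊨ skolemTheory arith]
  {A : Set M} {c : ι → M}

theorem not_isStd (hc : IsGenericOver digitFormula A c) (f : ι) : ¬ IsStd (c f) := fun hf =>
  hc ∅ f (Set.notMem_empty f) (c f) (mem_of_isStd hf) rfl

theorem codedSet_mem_SSy_iff (hc : IsGenericOver digitFormula A c) {T : Set ι} {f : ι} :
    codedSet digitFormula (c f) ∈ SSy (skolemHull arith (A ∪ c '' T)) ↔ f ∈ T := by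
  rw [mem_SSy_iff]
  refine ⟨fun ⟨a, ha, _, haf⟩ => hc.exists_mem_skolemHull_codedSet_eq_iff.1 ⟨a, ha, haf⟩,
    fun hf => ⟨c f, ?_, hc.not_isStd f, rfl⟩⟩
  exact subset_skolemHull _ (Or.inr (Set.mem_image_of_mem c hf))

theorem subset_of_SSy_subset (hc : IsGenericOver digitFormula A c) {T T' : Set ι}
    (h : SSy (skolemHull arith (A ∪ c '' T)) ⊆ SSy (skolemHull arith (A ∪ c '' T'))) : T ⊆ T' :=
  fun _ hf => hc.codedSet_mem_SSy_iff.1 (h (hc.codedSet_mem_SSy_iff.2 hf))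

theorem mk_le_mk_SSy (hc : IsGenericOver digitFormula A c) (T : Set ι) :
    #T ≤ #(SSy (skolemHull arith (A ∪ c '' T))) :=
  mk_le_of_injective (f := fun f : T => ⟨_, hc.codedSet_mem_SSy_iff.2 f.2⟩) fun _ _ hfg =>
    Subtype.ext (hc.codedSet_injective (Subtype.ext_iff.1 hfg))

theorem mk_skolemHull_eq_and_mk_SSy_eq (hc : IsGenericOver digitFormula A c) (hA : A.Countable)
    {T : Set ι} (hT : T.Infinite) :
    #(skolemHull arith (A ∪ c '' T)) = #T ∧ #(SSy (skolemHull arith (A ∪ c '' T))) = #T := by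
  have hull_le := mk_skolemHull_union_image_le (L := arith) hA c hT
  have le_SSy := hc.mk_le_mk_SSy T
  exact ⟨hull_le.antisymm (le_SSy.trans mk_SSy_le), (mk_SSy_le.trans hull_le).antisymm le_SSy⟩

end IsGenericOver

section Indexing

open Cardinal

universe u

theorem exists_setOrderEmbedding_mk_eq {α β : Type u} [Infinite β] (h : #α ≤ #β) :
    ∃ T : Set α ↪o Set β, ∀ X, #(T X) = max ℵ₀ #X := by
  have sum_le : #(α ⊕ ULift.{u} ℕ) ≤ #β := by
    simpa using add_le_of_le (aleph0_le_mk β) h (aleph0_le_mk β)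
  obtain ⟨j⟩ := sum_le
  let T (X : Set α) : Set β := j '' (Sum.inl '' X ∪ Set.range Sum.inr)
  have subset_iff {X Y : Set α} : T X ⊆ T Y ↔ X ⊆ Y := by
    refine (Set.image_subset_image_iff j.injective).trans ⟨fun h a ha => ?_, fun h => ?_⟩
    · simpa using h (Or.inl ⟨a, ha, rfl⟩)
    · exact Set.union_subset_union_left _ (Set.image_mono h)
  refine ⟨OrderEmbedding.ofMapLEIff T fun _ _ => subset_iff, fun X => ?_⟩
  calc #(T X) = #X + ℵ₀ := by
        rw [mk_image_eq j.injective, mk_union_of_disjoint, mk_image_eq Sum.inl_injective,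
          mk_range_eq _ Sum.inr_injective, mk_uLift, mk_nat, lift_aleph0]
        exact Set.isCompl_range_inl_range_inr.disjoint.mono_left (Set.image_subset_range _ _)
    _ = max ℵ₀ #X := by rw [add_eq_max' le_rfl, max_comm]

end Indexing

open Arith Cardinal in
theorem statement_5_general (N : Type) [arith.Structure N] (hN : IsRobinsonModel N)
    [Countable N] :
    ∃ (N' : Type) (_ : arith.Structure N') (e : N ↪ₑ[arith] N')
      (Mfam : Set (Set ℕ) → arith.ElementarySubstructure N'),
      (∀ X : Set (Set ℕ), Set.range e ⊆ (Mfam X : Set N')) ∧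
      (∀ X : Set (Set ℕ), #(Mfam X) = max ℵ₀ #X ∧ #(SSy (Mfam X)) = max ℵ₀ #X) ∧
      (∀ X Y : Set (Set ℕ),
        (X ⊆ Y ↔ (Mfam X : Set N') ⊆ (Mfam Y : Set N')) ∧
        (X ⊆ Y ↔ SSy (Mfam X) ⊆ SSy (Mfam Y))) := by
  have : Nonempty N := ⟨zeroM N⟩
  obtain ⟨c, hc⟩ := exists_isGenericOver hN.exists_mem_codedSet_digitFormula_iff
  obtain ⟨T, hT⟩ : ∃ T : Set (Set ℕ) ↪o Set (ℕ → Bool), ∀ X, #(T X) = max ℵ₀ #X :=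
    exists_setOrderEmbedding_mk_eq (by simp)
  have T_infinite (X) : (T X).Infinite :=
    Set.infinite_coe_iff.1 (infinite_iff.2 ((hT X).symm ▸ le_max_left _ _))
  let N' := Ultrapower (Filter.hyperfilter ℕ) N
  let e : N ↪ₑ[arith] N' := diagonal arith (Filter.hyperfilter ℕ) N
  let H (X : Set (Set ℕ)) : arith.ElementarySubstructure N' :=
    skolemHull arith (Set.range e ∪ c '' T X)
  have hull_mono {X Y : Set (Set ℕ)} (h : X ⊆ Y) : (H X : Set N') ⊆ (H Y : Set N') :=
    skolemHull_mono (Set.union_subset_union_right _ (Set.image_mono (T.monotone h)))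
  have subset_of_SSy {X Y : Set (Set ℕ)} (h : SSy (H X) ⊆ SSy (H Y)) : X ⊆ Y :=
    T.le_iff_le.1 (hc.subset_of_SSy_subset h)
  refine ⟨N', inferInstance, e, H, fun X => Set.subset_union_left.trans (subset_skolemHull _),
    fun X => ?_, fun X Y => ?_⟩
  · rw [← hT X]
    exact hc.mk_skolemHull_eq_and_mk_SSy_eq (Set.countable_range e) (T_infinite X)
  · exact ⟨⟨hull_mono, fun h => subset_of_SSy (SSy_mono h)⟩,
      ⟨fun h => SSy_mono (hull_mono h), subset_of_SSy⟩⟩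

open Arith in
/-- For every countable non-standard model `N` of `PA` there is a family
`(M_X : X ⊆ 2^ω)` of elementary extensions of `N` (realized as elementary substructures
of one elementary extension `N'` of `N`) with `|M_X| = |SSy(M_X)| = max{ω, |X|}` and
`X ⊆ Y ⟺ M_X ≼ M_Y ⟺ SSy(M_X) ⊆ SSy(M_Y)`. -/
theorem statement_5 (N : Type) [arith.Structure N] (hN : NonstandardModel N)
    (hNc : Countable N) :
    ∃ (N' : Type) (_ : arith.Structure N') (e : N ↪ₑ[arith] N')
      (Mfam : Set (Set ℕ) → arith.ElementarySubstructure N'),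
      (∀ X : Set (Set ℕ), Set.range e ⊆ (Mfam X : Set N')) ∧
      (∀ X : Set (Set ℕ),
        Cardinal.mk (Mfam X) = max Cardinal.aleph0 (Cardinal.mk X) ∧
        Cardinal.mk (SSy (Mfam X)) = max Cardinal.aleph0 (Cardinal.mk X)) ∧
      (∀ X Y : Set (Set ℕ),
        (X ⊆ Y ↔ (Mfam X : Set N') ⊆ (Mfam Y : Set N')) ∧
        (X ⊆ Y ↔ SSy (Mfam X) ⊆ SSy (Mfam Y))) :=
  statement_5_general N hN.1.isRobinsonModel
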